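/- Let R be a commutative ring, 1 ≤ t ≤ h, A a t×h matrix over R, and B an h×h matrix over R. Then A·B = Σ_{k=0}^{h−1} (φ^k(μ(A))) ⊙ ((π^k(ζ(B)))_{0:t}), where · is matrix multiplication and (·)_{0:t} denotes the t×h submatrix consisting of rows 0 through t−1. -/

import Mathlib

/-- `μ(A)_{i,j} = A_{i, i+j mod h}` for a `t × h` matrix `A`. -/
def rectMu {t h : ℕ} {R : Type*} (A : Matrix (Fin t) (ZMod h) R) :
    Matrix (Fin t) (ZMod h) R :=
  fun i j => A i (((i : ℕ) : ZMod h) + j)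

/-- `φ(A)_{i,j} = A_{i, j+1 mod h}` for a `t × h` matrix `A`. -/
def rectPhi {t h : ℕ} {R : Type*} (A : Matrix (Fin t) (ZMod h) R) :
    Matrix (Fin t) (ZMod h) R :=
  fun i j => A i (j + 1)

/-- `ζ(B)_{i,j} = B_{i+j, j}` -/
def matZeta {h : ℕ} {R : Type*} (B : Matrix (ZMod h) (ZMod h) R) :
    Matrix (ZMod h) (ZMod h) R :=
  fun i j => B (i + j) j

/-- `π(B)_{i,j} = B_{i+1, j}` -/
def matPi {h : ℕ} {R : Type*} (B : Matrix (ZMod h) (ZMod h) R) :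
    Matrix (ZMod h) (ZMod h) R :=
  fun i j => B (i + 1) j

/-- `C_{0:t}` : the `t × h` submatrix of an `h × h` matrix `C` formed by rows
`0` through `t-1`. -/
def rows {t h : ℕ} {R : Type*} (C : Matrix (ZMod h) (ZMod h) R) :
    Matrix (Fin t) (ZMod h) R :=
  fun i j => C (((i : ℕ) : ZMod h)) j

/-!
The `(i, j)` entries of `φ^k (μ A)` and `π^k (ζ B)` are `A i (i + j + k)` and `B (i + j + k) j`, so
their product is one term of the sum defining `(A * B) i j`. As `k` runs through `0, …, h - 1`, the
index `i + j + k` runs once through `ZMod h`.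
-/

theorem rectPhi_iterate_apply {t h : ℕ} {R : Type*} (k : ℕ) (A : Matrix (Fin t) (ZMod h) R)
    (i : Fin t) (j : ZMod h) : rectPhi^[k] A i j = A i (j + k) := by
  induction k generalizing j with
  | zero => simp
  | succ k ih =>
    rw [Function.iterate_succ_apply', rectPhi, ih, Nat.cast_succ, add_assoc, add_comm (1 : ZMod h)]

theorem matPi_iterate_apply {h : ℕ} {R : Type*} (k : ℕ) (B : Matrix (ZMod h) (ZMod h) R)
    (i j : ZMod h) : matPi^[k] B i j = B (i + k) j := by
  induction k generalizing i with
  | zero => simp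
  | succ k ih =>
    rw [Function.iterate_succ_apply', matPi, ih, Nat.cast_succ, add_assoc, add_comm (1 : ZMod h)]

theorem rectPhi_iterate_rectMu_apply {t h : ℕ} {R : Type*} (k : ℕ)
    (A : Matrix (Fin t) (ZMod h) R) (i : Fin t) (j : ZMod h) :
    rectPhi^[k] (rectMu A) i j = A i ((i : ℕ) + j + k) := by
  rw [rectPhi_iterate_apply, rectMu, add_assoc]

theorem rows_matPi_iterate_matZeta_apply {t h : ℕ} {R : Type*} (k : ℕ)
    (B : Matrix (ZMod h) (ZMod h) R) (i : Fin t) (j : ZMod h) :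
    rows (matPi^[k] (matZeta B)) i j = B ((i : ℕ) + j + k) j := by
  rw [rows, matPi_iterate_apply, matZeta, add_right_comm]

theorem sum_range_natCast_zmod {M : Type*} [AddCommMonoid M] {h : ℕ} [NeZero h] (f : ZMod h → M) :
    ∑ k ∈ Finset.range h, f k = ∑ x, f x :=
  Finset.sum_nbij' (fun k ↦ (k : ZMod h)) ZMod.val (by simp)
    (fun x _ ↦ Finset.mem_range.2 x.val_lt)
    (fun _ hk ↦ ZMod.val_cast_of_lt (Finset.mem_range.1 hk))
    (fun x _ ↦ x.natCast_zmod_val) (by simp)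

theorem matrix_mul_apply_eq_sum_add_left {l m G R : Type*} [AddGroup G] [Fintype G]
    [NonUnitalNonAssocSemiring R] (A : Matrix l G R) (B : Matrix G m R) (i : l) (j : m) (g : G) :
    (A * B) i j = ∑ x, A i (g + x) * B (g + x) j :=
  (Equiv.sum_comp (Equiv.addLeft g) fun x ↦ A i x * B x j).symm

theorem stmt_16_general {R : Type*} [NonUnitalNonAssocSemiring R] {t h : ℕ} [NeZero h]
    (A : Matrix (Fin t) (ZMod h) R) (B : Matrix (ZMod h) (ZMod h) R) :
    A * B = ∑ k ∈ Finset.range h,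
      Matrix.hadamard (rectPhi^[k] (rectMu A)) (rows (matPi^[k] (matZeta B))) := by
  ext i j
  calc (A * B) i j
      = ∑ x : ZMod h, A i ((i : ℕ) + j + x) * B ((i : ℕ) + j + x) j :=
        matrix_mul_apply_eq_sum_add_left A B i j ((i : ℕ) + j)
    _ = ∑ k ∈ Finset.range h, A i ((i : ℕ) + j + k) * B ((i : ℕ) + j + k) j :=
        (sum_range_natCast_zmod fun x : ZMod h ↦ A i ((i : ℕ) + j + x) * B ((i : ℕ) + j + x) j).symm
    _ = (∑ k ∈ Finset.range h,
          Matrix.hadamard (rectPhi^[k] (rectMu A)) (rows (matPi^[k] (matZeta B)))) i j := by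
        simp only [Matrix.sum_apply, Matrix.hadamard_apply, rectPhi_iterate_rectMu_apply,
          rows_matPi_iterate_matZeta_apply]

theorem stmt_16 (R : Type*) [CommRing R] (t h : ℕ) [NeZero h]
    (ht : 1 ≤ t) (hth : t ≤ h)
    (A : Matrix (Fin t) (ZMod h) R) (B : Matrix (ZMod h) (ZMod h) R) :
    A * B = ∑ k ∈ Finset.range h,
      Matrix.hadamard (rectPhi^[k] (rectMu A)) (rows (matPi^[k] (matZeta B))) :=
  stmt_16_general A B
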